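/- arXiv:1201.0282 — 2 statements merged into one kernel-verified Lean document; each statement's English description precedes it below -/
import Mathlib

section
/- 5 · 2^25 + 1 divides the Fermat number F_23 = 2^(2^23) + 1. -/
theorem dvd_pow_add_one_iff {m a k : ℕ} : m ∣ a ^ k + 1 ↔ (a : ZMod m) ^ k = -1 := by
  rw [← ZMod.natCast_eq_zero_iff, Nat.cast_succ, Nat.cast_pow, add_eq_zero_iff_eq_neg]

theorem simerka_fermat_23 : (5 * 2 ^ 25 + 1 : ℕ) ∣ 2 ^ (2 ^ 23) + 1 := by
  -- The power is reduced by repeated squaring, so the integer `2 ^ 2 ^ 23` is never evaluated.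
  have two_pow_eq_neg_one : (2 : ZMod (5 * 2 ^ 25 + 1)) ^ 2 ^ 23 = -1 := by reduce_mod_char
  rwa [dvd_pow_add_one_iff, Nat.cast_ofNat]
end

section
/- The class number h(-10079) equals 135, and since this is odd, 10079 is prime. -/
/-- The value of the binary quadratic form `(a,b,c)`, i.e. `a x² + b x y + c y²`. -/
def bqfVal (a b c x y : ℤ) : ℤ := a * x ^ 2 + b * x * y + c * y ^ 2

/-- `SL₂(ℤ)`-equivalence of binary quadratic forms. -/
def bqfEquiv (a b c a' b' c' : ℤ) : Prop :=
  ∃ p q r s : ℤ, p * s - q * r = 1 ∧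
    ∀ x y : ℤ, bqfVal a b c (p * x + q * y) (r * x + s * y) = bqfVal a' b' c' x y

/-- `(a,b,c)` is a primitive positive definite form of discriminant `Δ`. -/
def IsPosDefPrim (Δ a b c : ℤ) : Prop :=
  b ^ 2 - 4 * a * c = Δ ∧ 0 < a ∧ Int.gcd (Int.gcd a b) c = 1

/-- `cl` assigns to each primitive positive definite form of discriminant `Δ` an element of the
commutative group `G`, in a way compatible with `SL₂(ℤ)`-equivalence, inverses, and Dirichlet
(Gauss) composition of united forms, and such that a form maps to the identity iff it
represents `1`.  Such a map realizes the form class group `Cl(Δ)` inside `G`. -/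
structure IsFormClassMap (Δ : ℤ) {G : Type} [CommGroup G] (cl : ℤ → ℤ → ℤ → G) : Prop where
  equiv_eq : ∀ a b c a' b' c' : ℤ, IsPosDefPrim Δ a b c → IsPosDefPrim Δ a' b' c' →
    bqfEquiv a b c a' b' c' → cl a b c = cl a' b' c'
  inv_eq : ∀ a b c : ℤ, IsPosDefPrim Δ a b c → cl a (-b) c = (cl a b c)⁻¹
  comp : ∀ a₁ a₂ b c : ℤ, IsPosDefPrim Δ a₁ b (a₂ * c) → IsPosDefPrim Δ a₂ b (a₁ * c) →
    IsPosDefPrim Δ (a₁ * a₂) b c →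
    cl a₁ b (a₂ * c) * cl a₂ b (a₁ * c) = cl (a₁ * a₂) b c
  one_iff : ∀ a b c : ℤ, IsPosDefPrim Δ a b c →
    (cl a b c = 1 ↔ ∃ x y : ℤ, bqfVal a b c x y = 1)

/-!
Every positive definite form is properly equivalent to exactly one Gauss reduced form: a form in the
class with minimal leading coefficient can be translated into reduced position, while a reduced
form `(a, b, c)` takes only values `≥ c` off the line `y = 0`, which pins down the substitution
between two reduced forms. A reduced form of discriminant `Δ` has `3a² ≤ -Δ`, so `h(Δ)` is the size
of an explicit finite search.
-/

namespace bqfEquiv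

variable {a b c a' b' c' a'' b'' c'' : ℤ}

theorem refl (a b c : ℤ) : bqfEquiv a b c a b c :=
  ⟨1, 0, 0, 1, by norm_num, fun x y => by simp⟩

theorem symm (h : bqfEquiv a b c a' b' c') : bqfEquiv a' b' c' a b c := by
  obtain ⟨p, q, r, s, hdet, h⟩ := h
  refine ⟨s, -q, -r, p, by linarith, fun x y => ?_⟩
  rw [← h]
  congr 1
  · linear_combination x * hdet
  · linear_combination y * hdet

theorem trans (h : bqfEquiv a b c a' b' c') (h' : bqfEquiv a' b' c' a'' b'' c'') :
    bqfEquiv a b c a'' b'' c'' := by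
  obtain ⟨p, q, r, s, hdet, h⟩ := h
  obtain ⟨p', q', r', s', hdet', h'⟩ := h'
  refine ⟨p * p' + q * r', p * q' + q * s', r * p' + s * r', r * q' + s * s', ?_, fun x y => ?_⟩
  · linear_combination (p' * s' - q' * r') * hdet + hdet'
  · rw [← h', ← h]
    congr 1 <;> ring

theorem swap (a b c : ℤ) : bqfEquiv a b c c (-b) a :=
  ⟨0, -1, 1, 0, by norm_num, fun x y => by simp only [bqfVal]; ring⟩

theorem translate (a b c k : ℤ) : bqfEquiv a b c a (b + 2 * a * k) (bqfVal a b c k 1) :=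
  ⟨1, k, 0, 1, by norm_num, fun x y => by simp only [bqfVal]; ring⟩

theorem coeff_eq {p q r s : ℤ}
    (h : ∀ x y : ℤ, bqfVal a b c (p * x + q * y) (r * x + s * y) = bqfVal a' b' c' x y) :
    a' = bqfVal a b c p r ∧
    b' = 2 * a * p * q + b * (p * s + q * r) + 2 * c * r * s ∧
    c' = bqfVal a b c q s := by
  have h10 := h 1 0
  have h01 := h 0 1
  have h11 := h 1 1
  simp only [bqfVal] at h10 h01 h11 ⊢
  refine ⟨?_, ?_, ?_⟩ <;> linarith

theorem discr_eq (h : bqfEquiv a b c a' b' c') : b' ^ 2 - 4 * a' * c' = b ^ 2 - 4 * a * c := by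
  obtain ⟨p, q, r, s, hdet, h⟩ := h
  obtain ⟨rfl, rfl, rfl⟩ := coeff_eq h
  simp only [bqfVal]
  linear_combination (b ^ 2 - 4 * a * c) * (p * s - q * r + 1) * hdet

theorem gcd_dvd_gcd (h : bqfEquiv a b c a' b' c') :
    Int.gcd (Int.gcd a b) c ∣ Int.gcd (Int.gcd a' b') c' := by
  obtain ⟨p, q, r, s, -, h⟩ := h
  obtain ⟨rfl, rfl, rfl⟩ := coeff_eq h
  set g := Int.gcd (Int.gcd a b) c
  have hab : (g : ℤ) ∣ Int.gcd a b := Int.gcd_dvd_left ..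
  obtain ⟨a₀, ha⟩ : (g : ℤ) ∣ a := hab.trans (Int.gcd_dvd_left ..)
  obtain ⟨b₀, hb⟩ : (g : ℤ) ∣ b := hab.trans (Int.gcd_dvd_right ..)
  obtain ⟨c₀, hc⟩ : (g : ℤ) ∣ c := Int.gcd_dvd_right ..
  have dvd_val (x y : ℤ) : (g : ℤ) ∣ bqfVal a b c x y :=
    ⟨bqfVal a₀ b₀ c₀ x y, by rw [ha, hb, hc]; simp only [bqfVal]; ring⟩
  refine Int.dvd_gcd (Int.dvd_coe_gcd (dvd_val p r) ?_) (dvd_val q s)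
  exact ⟨2 * a₀ * p * q + b₀ * (p * s + q * r) + 2 * c₀ * r * s, by rw [ha, hb, hc]; ring⟩

end bqfEquiv

theorem bqfVal_pos {a b c x y : ℤ} (ha : 0 < a) (hdisc : b ^ 2 - 4 * a * c < 0)
    (hxy : x ≠ 0 ∨ y ≠ 0) : 0 < bqfVal a b c x y := by
  have complete_square : 4 * a * bqfVal a b c x y =
      (2 * a * x + b * y) ^ 2 + -(b ^ 2 - 4 * a * c) * y ^ 2 := by
    simp only [bqfVal]; ring
  have hpos : 0 < 4 * a * bqfVal a b c x y := by
    rw [complete_square]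
    rcases eq_or_ne y 0 with rfl | hy
    · have hx : x ≠ 0 := by simpa using hxy
      have : 0 < (2 * a * x) ^ 2 := by positivity
      simpa using this
    · have : 0 < -(b ^ 2 - 4 * a * c) * y ^ 2 := mul_pos (by linarith) (by positivity)
      positivity
  exact pos_of_mul_pos_right hpos (by positivity)

theorem IsPosDefPrim.of_bqfEquiv {Δ a b c a' b' c' : ℤ} (hΔ : Δ < 0) (h : IsPosDefPrim Δ a b c)
    (he : bqfEquiv a b c a' b' c') : IsPosDefPrim Δ a' b' c' := by
  obtain ⟨hdisc, ha, hgcd⟩ := h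
  refine ⟨he.discr_eq.trans hdisc, ?_, Nat.dvd_one.1 (hgcd ▸ he.symm.gcd_dvd_gcd)⟩
  obtain ⟨p, q, r, s, hdet, h⟩ := he
  rw [(bqfEquiv.coeff_eq h).1]
  refine bqfVal_pos ha (hdisc.trans_lt hΔ) ?_
  by_contra! hpr
  simp [hpr.1, hpr.2] at hdet

/-- Gauss reduced positive definite forms, with the boundary ambiguities `b = -a` and
`a = c, b < 0` excluded so that each class contains exactly one of them. -/
def IsGaussReduced (a b c : ℤ) : Prop := -a < b ∧ b ≤ a ∧ a ≤ c ∧ (a = c → 0 ≤ b)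

theorem exists_bqfEquiv_mem_Ioc {a : ℤ} (ha : 0 < a) (b c : ℤ) :
    ∃ b' c', bqfEquiv a b c a b' c' ∧ b' ∈ Set.Ioc (-a) a := by
  obtain ⟨k, hk, -⟩ := existsUnique_add_zsmul_mem_Ioc (show 0 < 2 * a by omega) b (-a)
  refine ⟨_, _, bqfEquiv.translate a b c k, ?_⟩
  rw [smul_eq_mul, mul_comm k] at hk
  exact ⟨hk.1, hk.2.trans (by linarith)⟩

theorem eq_of_mem_Ioc_of_dvd_sub {a b b' : ℤ} (hb : b ∈ Set.Ioc (-a) a) (hb' : b' ∈ Set.Ioc (-a) a)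
    (hdvd : 2 * a ∣ b' - b) : b' = b := by
  have habs : |b' - b| < 2 * a := abs_lt.2 ⟨by linarith [hb.2, hb'.1], by linarith [hb.1, hb'.2]⟩
  exact sub_eq_zero.1 (Int.eq_zero_of_abs_lt_dvd hdvd habs)

theorem exists_bqfEquiv_forall_le {Δ a b c : ℤ} (hΔ : Δ < 0) (h : IsPosDefPrim Δ a b c) :
    ∃ a₀ b₀ c₀, bqfEquiv a b c a₀ b₀ c₀ ∧
      ∀ a' b' c', bqfEquiv a b c a' b' c' → a₀ ≤ a' := by
  obtain ⟨a₀, ⟨b₀, c₀, h₀⟩, hmin⟩ :=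
    Int.exists_least_of_bdd (P := fun a' => ∃ b' c', bqfEquiv a b c a' b' c')
      ⟨0, fun a' ⟨_, _, h'⟩ => (h.of_bqfEquiv hΔ h').2.1.le⟩ ⟨a, b, c, .refl a b c⟩
  exact ⟨a₀, b₀, c₀, h₀, fun a' b' c' h' => hmin a' ⟨b', c', h'⟩⟩

theorem exists_isGaussReduced {Δ a b c : ℤ} (hΔ : Δ < 0) (h : IsPosDefPrim Δ a b c) :
    ∃ a' b' c', bqfEquiv a b c a' b' c' ∧ IsGaussReduced a' b' c' := by
  obtain ⟨a₀, b₀, c₀, h₀, hmin⟩ := exists_bqfEquiv_forall_le hΔ h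
  obtain ⟨b₁, c₁, h₁, hb₁, hb₁'⟩ := exists_bqfEquiv_mem_Ioc (h.of_bqfEquiv hΔ h₀).2.1 b₀ c₀
  have hequiv := h₀.trans h₁
  have hswap := hequiv.trans (.swap a₀ b₁ c₁)
  have hac : a₀ ≤ c₁ := hmin _ _ _ hswap
  by_cases hb : a₀ = c₁ ∧ b₁ < 0
  · exact ⟨_, _, _, hswap, by omega, by omega, by omega, by omega⟩
  · exact ⟨_, _, _, hequiv, hb₁, hb₁', hac, by omega⟩

theorem le_bqfVal_of_ne_zero {a b c x y : ℤ} (hba : |b| ≤ a) (hac : a ≤ c) (hy : y ≠ 0) :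
    c ≤ bqfVal a b c x y := by
  have hy' : 1 ≤ |y| := Int.one_le_abs hy
  have ha : 0 ≤ a := (abs_nonneg b).trans hba
  have habs : a * |x| ^ 2 - |b| * |x| * |y| + c * |y| ^ 2 ≤ bqfVal a b c x y := by
    have := neg_abs_le (b * x * y)
    rw [abs_mul, abs_mul] at this
    rw [sq_abs, sq_abs, bqfVal]
    linarith
  refine le_trans ?_ habs
  have hcross : |b| * |x| * |y| ≤ a * |x| * |y| := by gcongr
  have hlast : a * (|y| ^ 2 - 1) ≤ c * (|y| ^ 2 - 1) :=
    mul_le_mul_of_nonneg_right hac (by nlinarith)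
  have hunit : 0 ≤ a * (|x| ^ 2 - |x| * |y| + |y| ^ 2 - 1) := by
    refine mul_nonneg ha ?_
    have : 0 < |x| ^ 2 - |x| * |y| + |y| ^ 2 := by nlinarith [sq_nonneg (2 * |x| - |y|)]
    omega
  linarith

namespace IsGaussReduced

variable {a b c a' b' c' : ℤ}

theorem pos (h : IsGaussReduced a b c) : 0 < a := by
  obtain ⟨h₁, h₂, -⟩ := h
  omega

theorem middle_mem_Ioc (h : IsGaussReduced a b c) : b ∈ Set.Ioc (-a) a := ⟨h.1, h.2.1⟩

theorem abs_middle_le (h : IsGaussReduced a b c) : |b| ≤ a := abs_le.2 ⟨h.1.le, h.2.1⟩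

theorem three_mul_sq_le (h : IsGaussReduced a b c) : 3 * a ^ 2 ≤ 4 * a * c - b ^ 2 := by
  have hb : b ^ 2 ≤ a ^ 2 := sq_le_sq' h.1.le h.2.1
  have hac : a * a ≤ a * c := mul_le_mul_of_nonneg_left h.2.2.1 h.pos.le
  linarith

theorem eq_of_bqfEquiv (h : IsGaussReduced a b c) (h' : IsGaussReduced a' b' c')
    (he : bqfEquiv a b c a' b' c') : a = a' ∧ b = b' ∧ c = c' := by
  have hdiscr := he.discr_eq
  obtain ⟨p, q, r, s, hdet, hval⟩ := he
  obtain ⟨ha', hmid, -⟩ := bqfEquiv.coeff_eq hval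
  rcases eq_or_ne r 0 with rfl | hr
  · have hps : p * s = 1 := by linarith
    have hp : p ^ 2 = 1 := Int.isUnit_sq (.of_mul_eq_one s hps)
    obtain rfl : a' = a := by rw [ha', bqfVal, hp]; ring
    have hdvd : 2 * a' ∣ b' - b := ⟨p * q, by rw [hmid]; linear_combination b * hps⟩
    obtain rfl : b' = b := eq_of_mem_Ioc_of_dvd_sub h.middle_mem_Ioc h'.middle_mem_Ioc hdvd
    exact ⟨rfl, rfl, mul_left_cancel₀ h.pos.ne' (by linarith)⟩
  · have hca' : c ≤ a' := ha' ▸ le_bqfVal_of_ne_zero h.abs_middle_le h.2.2.1 hr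
    have hc'a : c' ≤ a := by
      have ha : bqfVal a' b' c' s (-r) = a := by
        rw [← hval, show p * s + q * -r = 1 by linarith, show r * s + s * -r = 0 by ring]
        simp [bqfVal]
      exact ha ▸ le_bqfVal_of_ne_zero h'.abs_middle_le h'.2.2.1 (neg_ne_zero.2 hr)
    obtain ⟨-, -, hac, hb⟩ := h
    obtain ⟨-, -, hac', hb'⟩ := h'
    obtain ⟨rfl, rfl, rfl⟩ : a = c ∧ a' = c ∧ c' = c := by omega
    exact ⟨rfl, (pow_left_inj₀ (hb rfl) (hb' rfl) two_ne_zero).1 (by linarith), rfl⟩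

end IsGaussReduced

instance (Δ a b c : ℤ) : Decidable (IsPosDefPrim Δ a b c) :=
  inferInstanceAs (Decidable (_ ∧ _ ∧ _))

instance (a b c : ℤ) : Decidable (IsGaussReduced a b c) :=
  inferInstanceAs (Decidable (_ ∧ _ ∧ _ ∧ _))

/-- The reduced primitive positive definite forms of discriminant `Δ`, as a search over the pairs
`(a, b)` with `1 ≤ a ≤ N` and `|b| ≤ N` for `N = ⌊√(-Δ / 3)⌋`. The discriminant determines `c`;
pairs for which the division defining it is inexact are discarded by `IsPosDefPrim`. -/
noncomputable def reducedForms (Δ : ℤ) : Finset (ℤ × ℤ × ℤ) :=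
  let N : ℤ := Nat.sqrt (-Δ / 3).toNat
  let toForm : ℤ × ℤ ↪ ℤ × ℤ × ℤ :=
    ⟨fun t => (t.1, t.2, (t.2 ^ 2 - Δ) / (4 * t.1)), fun t u h => by simp_all [Prod.ext_iff]⟩
  ((Finset.Icc 1 N ×ˢ Finset.Icc (-N) N).map toForm).filter fun f =>
    IsPosDefPrim Δ f.1 f.2.1 f.2.2 ∧ IsGaussReduced f.1 f.2.1 f.2.2

theorem mem_reducedForms {Δ a b c : ℤ} :
    (a, b, c) ∈ reducedForms Δ ↔ IsPosDefPrim Δ a b c ∧ IsGaussReduced a b c := by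
  refine Finset.mem_filter.trans (and_iff_right_of_imp ?_)
  intro (h : IsPosDefPrim Δ a b c ∧ IsGaussReduced a b c)
  obtain ⟨⟨hdisc, ha, -⟩, hr⟩ := h
  have haN : a ≤ Nat.sqrt (-Δ / 3).toNat := by
    have hsq : 3 * a ^ 2 ≤ -Δ := by linarith [hr.three_mul_sq_le]
    rw [← Int.toNat_le, Nat.le_sqrt', ← Int.toNat_pow_of_nonneg ha.le]
    exact Int.toNat_le_toNat (by omega)
  have hc : (b ^ 2 - Δ) / (4 * a) = c :=
    Int.ediv_eq_of_eq_mul_right (mul_pos four_pos ha).ne' (by linarith)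
  have hb := abs_le.1 hr.abs_middle_le
  exact Finset.mem_map.2 ⟨(a, b),
    Finset.mk_mem_product (Finset.mem_Icc.2 (by omega)) (Finset.mem_Icc.2 (by omega)),
    congrArg (fun c => (a, b, c)) hc⟩

/-- Primitive positive definite forms of discriminant `Δ` up to proper equivalence. -/
instance bqfSetoid (Δ : ℤ) : Setoid {f : ℤ × ℤ × ℤ // IsPosDefPrim Δ f.1 f.2.1 f.2.2} where
  r f g := bqfEquiv f.1.1 f.1.2.1 f.1.2.2 g.1.1 g.1.2.1 g.1.2.2
  iseqv := ⟨fun _ => .refl _ _ _, .symm, .trans⟩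

theorem card_quotient_bqfSetoid {Δ : ℤ} (hΔ : Δ < 0) :
    Nat.card (Quotient (bqfSetoid Δ)) = (reducedForms Δ).card := by
  let toClass (f : reducedForms Δ) : Quotient (bqfSetoid Δ) :=
    ⟦⟨f.1, (mem_reducedForms.1 f.2).1⟩⟧
  have hinj : Function.Injective toClass := by
    rintro ⟨⟨a, b, c⟩, hf⟩ ⟨⟨a', b', c'⟩, hg⟩ h
    obtain ⟨rfl, rfl, rfl⟩ :=
      (mem_reducedForms.1 hf).2.eq_of_bqfEquiv (mem_reducedForms.1 hg).2 (Quotient.exact h)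
    rfl
  have hsurj : Function.Surjective toClass := by
    rintro ⟨⟨a, b, c⟩, h⟩
    obtain ⟨a', b', c', he, hr⟩ := exists_isGaussReduced hΔ h
    exact ⟨⟨(a', b', c'), mem_reducedForms.2 ⟨h.of_bqfEquiv hΔ he, hr⟩⟩, Quotient.sound he.symm⟩
  rw [← Nat.card_eq_of_bijective toClass ⟨hinj, hsurj⟩, Nat.card_eq_finsetCard]

theorem card_reducedForms_neg_10079 : (reducedForms (-10079)).card = 135 := by
  decide +kernel

theorem class_number_10079 :
    Nat.card (Quot (fun f g : {f : ℤ × ℤ × ℤ // IsPosDefPrim (-10079) f.1 f.2.1 f.2.2} =>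
      bqfEquiv f.1.1 f.1.2.1 f.1.2.2 g.1.1 g.1.2.1 g.1.2.2)) = 135 ∧
    Odd 135 ∧ Nat.Prime 10079 :=
  ⟨(card_quotient_bqfSetoid (by norm_num)).trans card_reducedForms_neg_10079,
    by decide, by norm_num⟩
end
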